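/- On the space W, the operators T_± and T̃_± satisfy the Heisenberg commutation relations [T₊, T̃₋] = [T̃₊, T₋] = 1 (the identity operator on W), while all other commutators vanish: [T₊, T₋] = [T̃₊, T̃₋] = [T₊, T̃₊] = [T₋, T̃₋] = 0. -/

import Mathlib

/-!
The generalized Jordan–Schwinger construction for sl(2,ℝ).

Fix ε (encoded by `E : ℂ` with `E = 0 ∨ E = 1/2`) and j₀ ∈ ℂ. The space W has basis
{|j,m⟩ : j ∈ j₀ + (1/2)ℤ, m − ε − (j − j₀) ∈ ℤ}, indexed by `(a,b) : ℤ × ℤ` via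
j = j₀ + a/2, m = ε + a/2 + b; `single (a,b) 1` represents |j₀+a/2, ε+a/2+b⟩.
-/

noncomputable section

/-- Principal branch of the complex square root. -/
def csqrt (z : ℂ) : ℂ := z ^ ((1 : ℂ) / 2)

/-- C₊(j,m) = i √(j-m) √(j+m+1). -/
def Cp (j m : ℂ) : ℂ := Complex.I * csqrt (j - m) * csqrt (j + m + 1)

/-- C₋(j,m) = i √(j+m) √(j-m+1). -/
def Cm (j m : ℂ) : ℂ := Complex.I * csqrt (j + m) * csqrt (j - m + 1)

/-- The Jordan–Schwinger space W. -/
abbrev WJS := (ℤ × ℤ) →₀ ℂ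

/-- j = j₀ + a/2. -/
def jl (j₀ : ℂ) (a : ℤ) : ℂ := j₀ + (a : ℂ) / 2

/-- m = ε + a/2 + b. -/
def ml (E : ℂ) (a b : ℤ) : ℂ := E + (a : ℂ) / 2 + (b : ℂ)

/-- T₋ |j,m⟩ = √(j−m+1) |j+1/2, m−1/2⟩. -/
def Tm (j₀ E : ℂ) : WJS →ₗ[ℂ] WJS :=
  Finsupp.lsum ℂ fun p => LinearMap.toSpanSingleton ℂ WJS
    (Finsupp.single (p.1 + 1, p.2 - 1) (csqrt (jl j₀ p.1 - ml E p.1 p.2 + 1)))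

/-- T₊ |j,m⟩ = √(j+m+1) |j+1/2, m+1/2⟩. -/
def Tp (j₀ E : ℂ) : WJS →ₗ[ℂ] WJS :=
  Finsupp.lsum ℂ fun p => LinearMap.toSpanSingleton ℂ WJS
    (Finsupp.single (p.1 + 1, p.2) (csqrt (jl j₀ p.1 + ml E p.1 p.2 + 1)))

/-- T̃₋ |j,m⟩ = −√(j+m) |j−1/2, m−1/2⟩. -/
def Ttm (j₀ E : ℂ) : WJS →ₗ[ℂ] WJS :=
  Finsupp.lsum ℂ fun p => LinearMap.toSpanSingleton ℂ WJS
    (Finsupp.single (p.1 - 1, p.2) (-csqrt (jl j₀ p.1 + ml E p.1 p.2)))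

/-- T̃₊ |j,m⟩ = √(j−m) |j−1/2, m+1/2⟩. -/
def Ttp (j₀ E : ℂ) : WJS →ₗ[ℂ] WJS :=
  Finsupp.lsum ℂ fun p => LinearMap.toSpanSingleton ℂ WJS
    (Finsupp.single (p.1 - 1, p.2 + 1) (csqrt (jl j₀ p.1 - ml E p.1 p.2)))

/-!
Each of the four operators shifts the basis and multiplies by a weight. In the coordinates
`x = j + m` and `y = j - m`, the operators `T₊`, `T̃₋` move `x` by `±1` with weights depending
only on `x`, while `T₋`, `T̃₊` do the same with `y`; hence operators of different pairs commute.
Within a pair, either order of composition squares a single root, of `x` or of `x + 1`, and the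
relation becomes `(x + 1) - x = 1`. Only `√z * √z = z` is used, so the choice of branch is
immaterial.
-/

section WeightedShift

variable {G R : Type*}

/-- The weighted shift `|p⟩ ↦ w p |p + v⟩` on the free module with basis `|p⟩`, `p : G`: the common
form of the operators `T_±` and `T̃_±`. -/
def weightedShift [Add G] [Semiring R] (v : G) (w : G → R) : (G →₀ R) →ₗ[R] (G →₀ R) :=
  Finsupp.linearCombination R fun p => Finsupp.single (p + v) (w p)

theorem weightedShift_single [Add G] [Semiring R] (v : G) (w : G → R) (p : G) (c : R) :
    weightedShift v w (Finsupp.single p c) = Finsupp.single (p + v) (c * w p) := by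
  simp [weightedShift]

theorem weightedShift_comp [AddSemigroup G] [Semiring R] (u v : G) (f g : G → R) :
    weightedShift u f ∘ₗ weightedShift v g = weightedShift (v + u) fun p => g p * f (p + v) :=
  Finsupp.lhom_ext fun p c => by
    simp only [LinearMap.comp_apply, weightedShift_single, add_assoc, mul_assoc]

theorem weightedShift_sub [Add G] [Ring R] (v : G) (f g : G → R) :
    weightedShift v f - weightedShift v g = weightedShift v (f - g) :=
  Finsupp.lhom_ext fun p c => by
    simp only [LinearMap.sub_apply, weightedShift_single, Pi.sub_apply, mul_sub,
      Finsupp.single_sub]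

theorem weightedShift_neg [Add G] [Ring R] (v : G) (w : G → R) :
    weightedShift v (-w) = -weightedShift v w :=
  Finsupp.lhom_ext fun p c => by
    simp only [LinearMap.neg_apply, weightedShift_single, Pi.neg_apply, mul_neg,
      Finsupp.single_neg]

theorem weightedShift_zero_one [AddZeroClass G] [Semiring R] :
    weightedShift (0 : G) (1 : G → R) = LinearMap.id :=
  Finsupp.lhom_ext fun p c => by
    simp only [weightedShift_single, add_zero, Pi.one_apply, mul_one, LinearMap.id_apply]

theorem commute_weightedShift [AddCommSemigroup G] [CommSemiring R] {u v : G} {f g : G → R}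
    (hf : ∀ p, f (p + v) = f p) (hg : ∀ p, g (p + u) = g p) :
    Commute (weightedShift u f) (weightedShift v g) := by
  change weightedShift u f ∘ₗ weightedShift v g = weightedShift v g ∘ₗ weightedShift u f
  simp only [weightedShift_comp, hf, hg, add_comm u v, mul_comm]

theorem weightedShift_comp_sub_comp_eq_id [AddGroup G] [Ring R] {r : R → R}
    (hr : ∀ z, r z * r z = z) {v : G} {x : G → R} (hx : ∀ p, x (p + v) = x p + 1) :
    weightedShift (-v) (fun p => r (x p)) ∘ₗ weightedShift v (fun p => r (x p + 1)) -
      weightedShift v (fun p => r (x p + 1)) ∘ₗ weightedShift (-v) (fun p => r (x p)) =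
    LinearMap.id := by
  have hx_neg (p : G) : x (p + -v) + 1 = x p := by rw [← hx, neg_add_cancel_right]
  have weight_sub : (fun p => x p + 1) - x = 1 := funext fun p => add_sub_cancel_left (x p) 1
  simp only [weightedShift_comp, add_neg_cancel, neg_add_cancel, hx, hx_neg, hr]
  rw [weightedShift_sub, weight_sub, weightedShift_zero_one]

end WeightedShift

theorem csqrt_mul_self (z : ℂ) : csqrt z * csqrt z = z := by
  simpa [csqrt, pow_two] using Complex.cpow_nat_inv_pow z two_ne_zero

/-- The coordinate `x = j + m` of the basis vector `|j,m⟩` with index `p`, on which the weights of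
`T₊` and `T̃₋` depend. -/
def jAddM (j₀ E : ℂ) (p : ℤ × ℤ) : ℂ := jl j₀ p.1 + ml E p.1 p.2

/-- The coordinate `y = j - m` of the basis vector `|j,m⟩` with index `p`, on which the weights of
`T₋` and `T̃₊` depend. -/
def jSubM (j₀ E : ℂ) (p : ℤ × ℤ) : ℂ := jl j₀ p.1 - ml E p.1 p.2

section JordanSchwinger

variable (j₀ E : ℂ)

theorem jAddM_add (p v : ℤ × ℤ) : jAddM j₀ E (p + v) = jAddM j₀ E p + (v.1 + v.2) := by
  simp only [jAddM, jl, ml, Prod.fst_add, Prod.snd_add, Int.cast_add]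
  ring

theorem jSubM_add (p v : ℤ × ℤ) : jSubM j₀ E (p + v) = jSubM j₀ E p - v.2 := by
  simp only [jSubM, jl, ml, Prod.fst_add, Prod.snd_add, Int.cast_add]
  ring

theorem Tp_eq_weightedShift :
    Tp j₀ E = weightedShift (1, 0) fun p => csqrt (jAddM j₀ E p + 1) :=
  Finsupp.lhom_ext fun p c => by simp [Tp, weightedShift_single, jAddM, Prod.add_def]

theorem Ttm_eq_weightedShift :
    Ttm j₀ E = weightedShift (-(1, 0)) fun p => -csqrt (jAddM j₀ E p) :=
  Finsupp.lhom_ext fun p c => by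
    simp [Ttm, weightedShift_single, jAddM, Prod.add_def, sub_eq_add_neg]

theorem Tm_eq_weightedShift :
    Tm j₀ E = weightedShift (1, -1) fun p => csqrt (jSubM j₀ E p + 1) :=
  Finsupp.lhom_ext fun p c => by
    simp [Tm, weightedShift_single, jSubM, Prod.add_def, sub_eq_add_neg]

theorem Ttp_eq_weightedShift :
    Ttp j₀ E = weightedShift (-(1, -1)) fun p => csqrt (jSubM j₀ E p) :=
  Finsupp.lhom_ext fun p c => by
    simp [Ttp, weightedShift_single, jSubM, Prod.add_def, sub_eq_add_neg]

theorem Tp_comp_Ttm_sub_Ttm_comp_Tp :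
    Tp j₀ E ∘ₗ Ttm j₀ E - Ttm j₀ E ∘ₗ Tp j₀ E = LinearMap.id := by
  have raise_jAddM (p : ℤ × ℤ) : jAddM j₀ E (p + (1, 0)) = jAddM j₀ E p + 1 := by
    simp [jAddM_add]
  have Ttm_eq_neg : Ttm j₀ E = -weightedShift (-(1, 0)) fun p => csqrt (jAddM j₀ E p) := by
    rw [Ttm_eq_weightedShift, ← weightedShift_neg, Pi.neg_def]
  rw [Ttm_eq_neg, Tp_eq_weightedShift, LinearMap.comp_neg, LinearMap.neg_comp]
  exact (neg_sub_neg _ _).trans (weightedShift_comp_sub_comp_eq_id csqrt_mul_self raise_jAddM)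

theorem Ttp_comp_Tm_sub_Tm_comp_Ttp :
    Ttp j₀ E ∘ₗ Tm j₀ E - Tm j₀ E ∘ₗ Ttp j₀ E = LinearMap.id := by
  have raise_jSubM (p : ℤ × ℤ) : jSubM j₀ E (p + (1, -1)) = jSubM j₀ E p + 1 := by
    simp [jSubM_add]
  rw [Ttp_eq_weightedShift, Tm_eq_weightedShift]
  exact weightedShift_comp_sub_comp_eq_id csqrt_mul_self raise_jSubM

theorem commute_Tp_Tm : Commute (Tp j₀ E) (Tm j₀ E) := by
  rw [Tp_eq_weightedShift, Tm_eq_weightedShift]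
  exact commute_weightedShift (by simp [jAddM_add]) (by simp [jSubM_add])

theorem commute_Ttp_Ttm : Commute (Ttp j₀ E) (Ttm j₀ E) := by
  rw [Ttp_eq_weightedShift, Ttm_eq_weightedShift]
  exact commute_weightedShift (by simp [jSubM_add]) (by simp [jAddM_add])

theorem commute_Tp_Ttp : Commute (Tp j₀ E) (Ttp j₀ E) := by
  rw [Tp_eq_weightedShift, Ttp_eq_weightedShift]
  exact commute_weightedShift (by simp [jAddM_add]) (by simp [jSubM_add])

theorem commute_Tm_Ttm : Commute (Tm j₀ E) (Ttm j₀ E) := by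
  rw [Tm_eq_weightedShift, Ttm_eq_weightedShift]
  exact commute_weightedShift (by simp [jSubM_add]) (by simp [jAddM_add])

end JordanSchwinger

theorem heisenberg_relations_general (j₀ E : ℂ) :
    Tp j₀ E ∘ₗ Ttm j₀ E - Ttm j₀ E ∘ₗ Tp j₀ E = LinearMap.id ∧
    Ttp j₀ E ∘ₗ Tm j₀ E - Tm j₀ E ∘ₗ Ttp j₀ E = LinearMap.id ∧
    Tp j₀ E ∘ₗ Tm j₀ E - Tm j₀ E ∘ₗ Tp j₀ E = 0 ∧
    Ttp j₀ E ∘ₗ Ttm j₀ E - Ttm j₀ E ∘ₗ Ttp j₀ E = 0 ∧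
    Tp j₀ E ∘ₗ Ttp j₀ E - Ttp j₀ E ∘ₗ Tp j₀ E = 0 ∧
    Tm j₀ E ∘ₗ Ttm j₀ E - Ttm j₀ E ∘ₗ Tm j₀ E = 0 :=
  ⟨Tp_comp_Ttm_sub_Ttm_comp_Tp j₀ E,
    Ttp_comp_Tm_sub_Tm_comp_Ttp j₀ E,
    sub_eq_zero.2 (commute_Tp_Tm j₀ E),
    sub_eq_zero.2 (commute_Ttp_Ttm j₀ E),
    sub_eq_zero.2 (commute_Tp_Ttp j₀ E),
    sub_eq_zero.2 (commute_Tm_Ttm j₀ E)⟩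

/-- The operators T_±, T̃_± satisfy the Heisenberg commutation relations
[T₊,T̃₋] = [T̃₊,T₋] = 1, all other commutators vanishing. -/
theorem heisenberg_relations (j₀ E : ℂ) (hE : E = 0 ∨ E = 1 / 2) :
    Tp j₀ E ∘ₗ Ttm j₀ E - Ttm j₀ E ∘ₗ Tp j₀ E = LinearMap.id ∧
    Ttp j₀ E ∘ₗ Tm j₀ E - Tm j₀ E ∘ₗ Ttp j₀ E = LinearMap.id ∧
    Tp j₀ E ∘ₗ Tm j₀ E - Tm j₀ E ∘ₗ Tp j₀ E = 0 ∧
    Ttp j₀ E ∘ₗ Ttm j₀ E - Ttm j₀ E ∘ₗ Ttp j₀ E = 0 ∧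
    Tp j₀ E ∘ₗ Ttp j₀ E - Ttp j₀ E ∘ₗ Tp j₀ E = 0 ∧
    Tm j₀ E ∘ₗ Ttm j₀ E - Ttm j₀ E ∘ₗ Tm j₀ E = 0 :=
  heisenberg_relations_general j₀ E

end
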